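/- arXiv:1209.3510 — 7 statements merged into one kernel-verified Lean document; each statement's English description precedes it below -/
import Mathlib

section
/- Let U ⊆ ℝ³ be open and let e_j : U → ℝ³ (j = 1,2,3) be a continuously differentiable frame, i.e. e₁(x), e₂(x), e₃(x) are linearly independent at every x ∈ U. Set σ^α(x) := Σ_{j=1}^{3} e_j^α(x) s^j, g^{αβ}(x) := Σ_{j=1}^{3} e_j^α(x) e_j^β(x), h⁺(x,ξ) := √(Σ_{α,β} g^{αβ}(x) ξ_α ξ_β), and let c(x) := sign of the determinant of the 3×3 matrix whose j-th row is e_j(x). Let g_{αβ}(x) be the inverse matrix of g^{αβ}(x), let the coframe e^k : U → ℝ³ be defined by Σ_α e_j^α e^k_α = δ_j^k, define (curl e^j)_β := (1/2) √(det g_{μν}) Σ_{γ,δ,μ,ν} ε_{γδβ} g^{γμ} g^{δν} (∂e^j_ν/∂x^μ − ∂e^j_μ/∂x^ν) (ε the totally antisymmetric symbol with ε₁₂₃ = 1), and set *T^{αβ} := Σ_{j,γ} e_j^α g^{βγ} (curl e^j)_γ. Suppose V is an open subset of U × (ℝ³ \ {0}) and v⁺ : V → ℂ² is continuously differentiable with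 ‖v⁺(x,ξ)‖ = 1 and Σ_α ξ_α σ^α(x) v⁺(x,ξ) = h⁺(x,ξ) v⁺(x,ξ) for all (x,ξ) ∈ V. Then at every point (x,ξ) ∈ V: −i Σ_{α=1}^{3} [ (∂v⁺/∂x^α)^* (∂v⁺/∂ξ_α) − (∂v⁺/∂ξ_α)^* (∂v⁺/∂x^α) ] = (c(x)/2) · (Σ_{α,β} *T^{αβ}(x) ξ_α ξ_β) / (Σ_{μ,ν} g^{μν}(x) ξ_μ ξ_ν)^{3/2}. -/
open Complex Matrix BigOperators

noncomputable section

/-- The Pauli matrices s¹, s², s³. -/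
def pauli : Fin 3 → Matrix (Fin 2) (Fin 2) ℂ :=
  ![!![0, 1; 1, 0], !![0, -Complex.I; Complex.I, 0], !![1, 0; 0, -1]]

/-- The totally antisymmetric symbol ε on three indices, ε₀₁₂ = 1. -/
def eps (i j k : Fin 3) : ℝ :=
  ((((j : ℤ) - (i : ℤ)) * (((k : ℤ) - (j : ℤ))) * (((k : ℤ) - (i : ℤ))) : ℤ) : ℝ) / 2

/-- The contravariant metric g^{αβ} = Σ_j e_j^α e_j^β generated by a frame e. -/
def gM (e : (Fin 3 → ℝ) → Fin 3 → Fin 3 → ℝ) (x : Fin 3 → ℝ) : Matrix (Fin 3) (Fin 3) ℝ :=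
  Matrix.of fun α β => ∑ j, e x j α * e x j β

/-- (curl e^j)_β at x, for a coframe f (f x k α = e^k_α(x)). -/
def curlCoframe (e : (Fin 3 → ℝ) → Fin 3 → Fin 3 → ℝ)
    (f : (Fin 3 → ℝ) → Fin 3 → Fin 3 → ℝ) (x : Fin 3 → ℝ) (j β : Fin 3) : ℝ :=
  (1 / 2) * Real.sqrt ((gM e x)⁻¹.det) *
    ∑ γ, ∑ δ, ∑ μ, ∑ ν, eps γ δ β * gM e x γ μ * gM e x δ ν *
      (fderiv ℝ (fun y => f y j ν) x (Pi.single μ 1)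
        - fderiv ℝ (fun y => f y j μ) x (Pi.single ν 1))

/-- The Hodge-dualized torsion *T^{αβ} = Σ_{j,γ} e_j^α g^{βγ} (curl e^j)_γ. -/
def starT (e : (Fin 3 → ℝ) → Fin 3 → Fin 3 → ℝ)
    (f : (Fin 3 → ℝ) → Fin 3 → Fin 3 → ℝ) (x : Fin 3 → ℝ) (α β : Fin 3) : ℝ :=
  ∑ j, ∑ γ, e x j α * gM e x β γ * curlCoframe e f x j γ

/-- The topological charge c(x) = sgn det(e_j^α(x)). -/
def charge (e : (Fin 3 → ℝ) → Fin 3 → Fin 3 → ℝ) (x : Fin 3 → ℝ) : ℝ :=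
  Real.sign (Matrix.of (e x) : Matrix (Fin 3) (Fin 3) ℝ).det

/-- The spin vector of a spinor with components `p + i q`, `r + i s`. -/
lemma aux_spinor_identity (p q r s a1 a2 a3 a4 b1 b2 b3 b4 : ℝ)
    (hN : p ^ 2 + q ^ 2 + r ^ 2 + s ^ 2 = 1)
    (ha : p * a1 + q * a2 + r * a3 + s * a4 = 0)
    (hb : p * b1 + q * b2 + r * b3 + s * b4 = 0)
    (n A B : Fin 3 → ℝ)
    (hn0 : n 0 = 2 * (p * r + q * s)) (hn1 : n 1 = 2 * (p * s - q * r))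
    (hn2 : n 2 = p ^ 2 + q ^ 2 - r ^ 2 - s ^ 2)
    (hA0 : A 0 = 2 * (a1 * r + p * a3 + a2 * s + q * a4))
    (hA1 : A 1 = 2 * (a1 * s + p * a4 - a2 * r - q * a3))
    (hA2 : A 2 = 2 * (p * a1 + q * a2 - r * a3 - s * a4))
    (hB0 : B 0 = 2 * (b1 * r + p * b3 + b2 * s + q * b4))
    (hB1 : B 1 = 2 * (b1 * s + p * b4 - b2 * r - q * b3))
    (hB2 : B 2 = 2 * (p * b1 + q * b2 - r * b3 - s * b4)) :
    n 0 * (A 1 * B 2 - A 2 * B 1) + n 1 * (A 2 * B 0 - A 0 * B 2)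
      + n 2 * (A 0 * B 1 - A 1 * B 0)
      = 4 * (a1 * b2 - a2 * b1 + a3 * b4 - a4 * b3) := by
  have key : n 0 * (A 1 * B 2 - A 2 * B 1) + n 1 * (A 2 * B 0 - A 0 * B 2)
      + n 2 * (A 0 * B 1 - A 1 * B 0)
      = 4 * (p ^ 2 + q ^ 2 + r ^ 2 + s ^ 2) ^ 2 * (a1 * b2 - a2 * b1 + a3 * b4 - a4 * b3)
        - 4 * (p ^ 2 + q ^ 2 + r ^ 2 + s ^ 2) *
          ((p * a1 + q * a2 + r * a3 + s * a4) * (p * b2 - q * b1 + r * b4 - s * b3)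
          - (p * a2 - q * a1 + r * a4 - s * a3) * (p * b1 + q * b2 + r * b3 + s * b4)) := by
    rw [hn0, hn1, hn2, hA0, hA1, hA2, hB0, hB1, hB2]; ring
  rw [key, hN, ha, hb]; ring

/-- Real form of the eigenvalue equation. -/
lemma aux_eigen (z w : ℂ) (x : Fin 3 → ℝ) (h : ℝ)
    (hN : Complex.normSq z + Complex.normSq w = 1)
    (h1 : (x 2 : ℂ) * z + ((x 0 : ℂ) - x 1 * Complex.I) * w = h * z)
    (h2 : ((x 0 : ℂ) + x 1 * Complex.I) * z - (x 2 : ℂ) * w = h * w) :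
    x 0 = h * (2 * (z.re * w.re + z.im * w.im)) ∧
    x 1 = h * (2 * (z.re * w.im - z.im * w.re)) ∧
    x 2 = h * (z.re ^ 2 + z.im ^ 2 - w.re ^ 2 - w.im ^ 2) := by
  have e1 := congrArg Complex.re h1
  have e2 := congrArg Complex.im h1
  have e3 := congrArg Complex.re h2
  have e4 := congrArg Complex.im h2
  simp at e1 e2 e3 e4
  simp only [Complex.normSq_apply] at hN
  refine ⟨?_, ?_, ?_⟩
  · linear_combination (-x 0) * hN + w.re * e1 + w.im * e2 + z.re * e3 + z.im * e4
  · linear_combination (-x 1) * hN + w.im * e1 - w.re * e2 - z.im * e3 + z.re * e4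
  · linear_combination (-x 2) * hN + z.re * e1 + z.im * e2 - w.re * e3 - w.im * e4

lemma aux_eps_contract (E : Fin 3 → Fin 3 → ℝ) (u w : Fin 3 → ℝ) (k : Fin 3) :
    ∑ γ, ∑ δ, ∑ β, eps γ δ β * (∑ l, E l γ * u l) * (∑ m, E m δ * w m) * E k β
      = (Matrix.of E).det * ∑ l, ∑ m, eps l m k * u l * w m := by
  fin_cases k <;> simp [Fin.sum_univ_three, eps, Matrix.det_fin_three] <;> ring

/-- Directional derivatives. -/
lemma aux_deriv {F : Type*} [NormedAddCommGroup F] [NormedSpace ℝ F]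
    (V : Set F) (hV : IsOpen V) (v : F → Fin 2 → ℂ) (x : F → Fin 3 → ℝ) (h : F → ℝ)
    (p : F) (hp : p ∈ V)
    (hv : ∀ i, DifferentiableAt ℝ (fun q => v q i) p)
    (hx : ∀ j, DifferentiableAt ℝ (fun q => x q j) p)
    (hN : ∀ q ∈ V, Complex.normSq (v q 0) + Complex.normSq (v q 1) = 1)
    (h0 : ∀ q ∈ V, x q 0 = h q * (2 * ((v q 0).re * (v q 1).re + (v q 0).im * (v q 1).im)))
    (h1 : ∀ q ∈ V, x q 1 = h q * (2 * ((v q 0).re * (v q 1).im - (v q 0).im * (v q 1).re)))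
    (h2 : ∀ q ∈ V, x q 2 = h q * ((v q 0).re ^ 2 + (v q 0).im ^ 2 - (v q 1).re ^ 2
      - (v q 1).im ^ 2)) (d : F) (a b : ℂ)
    (ha : a = fderiv ℝ (fun q => v q 0) p d) (hb : b = fderiv ℝ (fun q => v q 1) p d) :
    ((v p 0).re * a.re + (v p 0).im * a.im + (v p 1).re * b.re + (v p 1).im * b.im = 0) ∧
    ∃ l : ℝ,
      fderiv ℝ (fun q => x q 0) p d
        = l * (2 * ((v p 0).re * (v p 1).re + (v p 0).im * (v p 1).im))
        + h p * (2 * (a.re * (v p 1).re + (v p 0).re * b.re + a.im * (v p 1).im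
          + (v p 0).im * b.im)) ∧
      fderiv ℝ (fun q => x q 1) p d
        = l * (2 * ((v p 0).re * (v p 1).im - (v p 0).im * (v p 1).re))
        + h p * (2 * (a.re * (v p 1).im + (v p 0).re * b.im - a.im * (v p 1).re
          - (v p 0).im * b.re)) ∧
      fderiv ℝ (fun q => x q 2) p d
        = l * ((v p 0).re ^ 2 + (v p 0).im ^ 2 - (v p 1).re ^ 2 - (v p 1).im ^ 2)
        + h p * (2 * ((v p 0).re * a.re + (v p 0).im * a.im - (v p 1).re * b.re
          - (v p 1).im * b.im)) := by
  have hre : ∀ i, HasFDerivAt (fun q => (v q i).re)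
      (Complex.reCLM.comp (fderiv ℝ (fun q => v q i) p)) p := fun i =>
    Complex.reCLM.hasFDerivAt.comp p (hv i).hasFDerivAt
  have him : ∀ i, HasFDerivAt (fun q => (v q i).im)
      (Complex.imCLM.comp (fderiv ℝ (fun q => v q i) p)) p := fun i =>
    Complex.imCLM.hasFDerivAt.comp p (hv i).hasFDerivAt
  have hVp : ∀ᶠ q in nhds p, q ∈ V := hV.mem_nhds hp
  have n0 := (((hre 0).mul (hre 1)).add ((him 0).mul (him 1))).const_mul 2
  have n1 := (((hre 0).mul (him 1)).sub ((him 0).mul (hre 1))).const_mul 2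
  have n2 := ((((hre 0).mul (hre 0)).add ((him 0).mul (him 0))).sub
    ((hre 1).mul (hre 1))).sub ((him 1).mul (him 1))
  have nN := ((((hre 0).mul (hre 0)).add ((him 0).mul (him 0))).add
    ((hre 1).mul (hre 1))).add ((him 1).mul (him 1))
  have hH := (((hx 0).hasFDerivAt.mul n0).add ((hx 1).hasFDerivAt.mul n1)).add
    ((hx 2).hasFDerivAt.mul n2)
  obtain ⟨L, hH'⟩ : ∃ L, HasFDerivAt h L p := ⟨_, hH.congr_of_eventuallyEq (by
    filter_upwards [hVp] with q hq
    have := hN q hq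
    simp only [Complex.normSq_apply] at this
    simp only [Pi.add_apply, Pi.mul_apply, Pi.sub_apply]
    rw [h0 q hq, h1 q hq, h2 q hq]
    linear_combination (-h q) * (((v q 0).re * (v q 0).re + (v q 0).im * (v q 0).im +
      ((v q 1).re * (v q 1).re + (v q 1).im * (v q 1).im)) + 1) * this)⟩
  have EN := nN.unique ((hasFDerivAt_const (1 : ℝ) p).congr_of_eventuallyEq (by
    filter_upwards [hVp] with q hq
    have := hN q hq
    simp only [Complex.normSq_apply] at this
    simp only [Pi.add_apply, Pi.mul_apply, Pi.sub_apply]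
    linarith))
  have E0 := ((hH'.mul n0).congr_of_eventuallyEq (f₁ := fun q => x q 0) (by
    filter_upwards [hVp] with q hq
    simp only [Pi.add_apply, Pi.mul_apply, Pi.sub_apply]
    rw [h0 q hq])).fderiv
  have E1 := ((hH'.mul n1).congr_of_eventuallyEq (f₁ := fun q => x q 1) (by
    filter_upwards [hVp] with q hq
    simp only [Pi.add_apply, Pi.mul_apply, Pi.sub_apply]
    rw [h1 q hq])).fderiv
  have E2 := ((hH'.mul n2).congr_of_eventuallyEq (f₁ := fun q => x q 2) (by
    filter_upwards [hVp] with q hq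
    simp only [Pi.add_apply, Pi.mul_apply, Pi.sub_apply]
    rw [h2 q hq]; ring)).fderiv
  refine ⟨?_, L d, ?_, ?_, ?_⟩
  · have := DFunLike.congr_fun EN d
    simp at this
    rw [ha, hb]; linarith
  · rw [E0, ha, hb]
    simp
    ring
  · rw [E1, ha, hb]
    simp
    ring
  · rw [E2, ha, hb]
    simp
    ring


lemma aux_swap (a : Fin 3 → ℝ) (g Z : Fin 3 → Fin 3 → ℝ) :
    ∑ γ, a γ * ∑ γ', ∑ δ, ∑ μ, ∑ ν, eps γ' δ γ * g γ' μ * g δ ν * Z μ ν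
      = ∑ μ, ∑ ν, Z μ ν * ∑ γ', ∑ δ, ∑ γ, eps γ' δ γ * g γ' μ * g δ ν * a γ := by
  simp [Fin.sum_univ_three, eps]
  ring

lemma aux_lin (E g Y : Fin 3 → Fin 3 → ℝ) (ξ : Fin 3 → ℝ) (c : ℝ) :
    ∑ α, ∑ β, (∑ j, ∑ γ, E j α * g β γ * (c * Y j γ)) * ξ α * ξ β
      = c * ∑ j, (∑ α, E j α * ξ α) * ∑ γ, (∑ β, g β γ * ξ β) * Y j γ := by
  have h1 : ∀ α β, (∑ j, ∑ γ, E j α * g β γ * (c * Y j γ)) * ξ α * ξ β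
      = ∑ j, c * ((E j α * ξ α) * ∑ γ, (g β γ * ξ β) * Y j γ) := by
    intro α β
    simp only [Finset.sum_mul, Finset.mul_sum]
    refine Finset.sum_congr rfl fun j _ => Finset.sum_congr rfl fun γ _ => ?_
    ring
  simp only [h1]
  have h2 : ∀ α, ∑ β, ∑ j, c * ((E j α * ξ α) * ∑ γ, (g β γ * ξ β) * Y j γ)
      = ∑ j, c * ((E j α * ξ α) * ∑ γ, (∑ β, g β γ * ξ β) * Y j γ) := by
    intro α
    rw [Finset.sum_comm]
    refine Finset.sum_congr rfl fun j _ => ?_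
    rw [← Finset.mul_sum, ← Finset.mul_sum, Finset.sum_comm]
    simp only [Finset.sum_mul]
  simp only [h2]
  rw [Finset.sum_comm, Finset.mul_sum]
  refine Finset.sum_congr rfl fun j _ => ?_
  rw [← Finset.mul_sum, Finset.sum_mul]

lemma aux_torsion (E f : Fin 3 → Fin 3 → ℝ) (dE df : Fin 3 → Fin 3 → Fin 3 → ℝ)
    (ξ η : Fin 3 → ℝ) (g : Matrix (Fin 3) (Fin 3) ℝ)
    (hg : ∀ α β, g α β = ∑ j, E j α * E j β)
    (hη : ∀ j, η j = ∑ α, E j α * ξ α)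
    (hd : ∀ m j μ, ∑ ν, (E m ν * df j ν μ + f j ν * dE m ν μ) = 0)
    (hξ : ∀ ν, ∑ j, f j ν * η j = ξ ν) (S : ℝ) :
    ∑ α, ∑ β, (∑ j, ∑ γ, E j α * g β γ * ((1 / 2) * S *
      ∑ γ', ∑ δ, ∑ μ, ∑ ν, eps γ' δ γ * g γ' μ * g δ ν * (df j ν μ - df j μ ν))) * ξ α * ξ β
      = S * (Matrix.of E).det * ∑ α,
        (η 0 * ((∑ β, dE 1 β α * ξ β) * E 2 α - (∑ β, dE 2 β α * ξ β) * E 1 α)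
        + η 1 * ((∑ β, dE 2 β α * ξ β) * E 0 α - (∑ β, dE 0 β α * ξ β) * E 2 α)
        + η 2 * ((∑ β, dE 0 β α * ξ β) * E 1 α - (∑ β, dE 1 β α * ξ β) * E 0 α)) := by
  -- contraction with the metric
  have hgξ : ∀ γ, ∑ β, g β γ * ξ β = ∑ k, η k * E k γ := by
    intro γ
    simp only [hg, hη, Fin.sum_univ_three]; ring
  let W : Fin 3 → Fin 3 → ℝ := fun l m => ∑ α, (∑ β, dE m β α * ξ β) * E l α
  let X : Fin 3 → Fin 3 → Fin 3 → ℝ := fun j l m => ∑ μ, ∑ ν, E l μ * E m ν * df j ν μ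
  have hX : ∀ l m, ∑ j, η j * X j l m = - W l m := by
    intro l m
    have h1 : ∀ j, X j l m = - ∑ μ, ∑ ν, E l μ * (f j ν * dE m ν μ) := by
      intro j
      have : ∑ μ, E l μ * ∑ ν, (E m ν * df j ν μ + f j ν * dE m ν μ) = 0 := by
        simp only [hd, mul_zero, Finset.sum_const_zero]
      simp only [X, Fin.sum_univ_three] at this ⊢
      linear_combination this
    simp only [h1, W, ← hξ, Fin.sum_univ_three]
    ring
  have hcon : ∀ j, ∑ γ, (∑ β, g β γ * ξ β) *
      ∑ γ', ∑ δ, ∑ μ, ∑ ν, eps γ' δ γ * g γ' μ * g δ ν * (df j ν μ - df j μ ν)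
      = (Matrix.of E).det * ∑ k, η k * ∑ l, ∑ m, eps l m k * (X j l m - X j m l) := by
    intro j
    have h1 : ∀ k μ ν, ∑ γ', ∑ δ, ∑ γ, eps γ' δ γ * g γ' μ * g δ ν * E k γ
        = (Matrix.of E).det * ∑ l, ∑ m, eps l m k * E l μ * E m ν := by
      intro k μ ν
      rw [← aux_eps_contract E (fun l => E l μ) (fun m => E m ν) k]
      simp only [hg]
    have h2 : ∀ μ ν, ∑ γ', ∑ δ, ∑ γ, eps γ' δ γ * g γ' μ * g δ ν * (∑ k, η k * E k γ)
        = ∑ k, η k * ∑ γ', ∑ δ, ∑ γ, eps γ' δ γ * g γ' μ * g δ ν * E k γ := by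
      intro μ ν
      simp only [Fin.sum_univ_three]
      ring
    rw [aux_swap (fun γ => ∑ β, g β γ * ξ β) g (fun μ ν => df j ν μ - df j μ ν)]
    calc _ = ∑ k, η k * ∑ μ, ∑ ν, (df j ν μ - df j μ ν) *
            ∑ γ', ∑ δ, ∑ γ, eps γ' δ γ * g γ' μ * g δ ν * E k γ := by
          simp only [hgξ, h2, h1]
          simp only [Fin.sum_univ_three (f := fun k => η k * _), Fin.sum_univ_three (f := fun μ => ∑ ν, (df j ν μ - df j μ ν) * _)]
          simp only [Fin.sum_univ_three]
          ring
      _ = ∑ k, η k * ∑ μ, ∑ ν, (df j ν μ - df j μ ν) *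
            ((Matrix.of E).det * ∑ l, ∑ m, eps l m k * E l μ * E m ν) := by
          simp only [h1]
      _ = _ := by
          rw [Finset.mul_sum]
          refine Finset.sum_congr rfl fun k _ => ?_
          generalize (Matrix.of E).det = D
          simp only [X, Fin.sum_univ_three]
          fin_cases k <;> simp [eps] <;> ring
  rw [aux_lin E g (fun j γ => ∑ γ', ∑ δ, ∑ μ, ∑ ν,
    eps γ' δ γ * g γ' μ * g δ ν * (df j ν μ - df j μ ν)) ξ (1 / 2 * S)]
  simp only [← hη]
  simp only [hcon]
  have hR : ∑ α,
        (η 0 * ((∑ β, dE 1 β α * ξ β) * E 2 α - (∑ β, dE 2 β α * ξ β) * E 1 α)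
        + η 1 * ((∑ β, dE 2 β α * ξ β) * E 0 α - (∑ β, dE 0 β α * ξ β) * E 2 α)
        + η 2 * ((∑ β, dE 0 β α * ξ β) * E 1 α - (∑ β, dE 1 β α * ξ β) * E 0 α))
      = η 0 * (W 2 1 - W 1 2) + η 1 * (W 0 2 - W 2 0) + η 2 * (W 1 0 - W 0 1) := by
    simp only [W, Finset.sum_add_distrib, ← Finset.mul_sum, Finset.sum_sub_distrib]
  rw [hR]
  have hW : ∀ l m, W l m = - ∑ j, η j * X j l m := fun l m => by rw [hX]; ring
  simp only [hW]
  generalize (Matrix.of E).det = D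
  generalize X = X
  simp [Fin.sum_univ_three, eps]
  ring

/-- Lemma 4.1: the scalar curvature of the U(1) connection generated by the
positive eigenspace of the principal symbol is expressed via the torsion of the teleparallel
connection, the metric and the topological charge. -/
theorem u1_curvature_eq_torsion
    (U : Set (Fin 3 → ℝ)) (hU : IsOpen U)
    (e : (Fin 3 → ℝ) → Fin 3 → Fin 3 → ℝ)
    (he : ∀ j α, ContDiffOn ℝ 1 (fun x => e x j α) U)
    (hli : ∀ x ∈ U, LinearIndependent ℝ (e x))
    (f : (Fin 3 → ℝ) → Fin 3 → Fin 3 → ℝ)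
    (hf : ∀ x ∈ U, ∀ j k, ∑ α, e x j α * f x k α = if j = k then (1 : ℝ) else 0)
    (V : Set ((Fin 3 → ℝ) × (Fin 3 → ℝ))) (hV : IsOpen V)
    (hVU : V ⊆ U ×ˢ {ξ : Fin 3 → ℝ | ξ ≠ 0})
    (v : ((Fin 3 → ℝ) × (Fin 3 → ℝ)) → Fin 2 → ℂ)
    (hv : ∀ i, ContDiffOn ℝ 1 (fun p => v p i) V)
    (hnorm : ∀ p ∈ V, ∑ i, Complex.normSq (v p i) = 1)
    (heig : ∀ p ∈ V,
      (∑ α, (p.2 α : ℂ) • (∑ j, (e p.1 j α : ℂ) • pauli j)).mulVec (v p)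
        = ((Real.sqrt (∑ α, ∑ β, gM e p.1 α β * p.2 α * p.2 β) : ℝ) : ℂ) • v p) :
    ∀ p ∈ V,
      -Complex.I * ∑ α : Fin 3,
          ((∑ i, (starRingEnd ℂ) (fderiv ℝ (fun q => v q i) p (Pi.single α 1, 0))
                * fderiv ℝ (fun q => v q i) p (0, Pi.single α 1))
            - (∑ i, (starRingEnd ℂ) (fderiv ℝ (fun q => v q i) p (0, Pi.single α 1))
                * fderiv ℝ (fun q => v q i) p (Pi.single α 1, 0)))
        = (((charge e p.1 / 2)
            * ((∑ α, ∑ β, starT e f p.1 α β * p.2 α * p.2 β)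
                / (∑ μ, ∑ ν, gM e p.1 μ ν * p.2 μ * p.2 ν) ^ ((3 : ℝ) / 2)) : ℝ) : ℂ) := by
  intro p hp
  have hpU : p.1 ∈ U := (hVU hp).1
  have hξ0 : p.2 ≠ 0 := (hVU hp).2
  -- frame and coframe
  have hdet : ∀ y ∈ U, (Matrix.of (e y)).det ≠ 0 := by
    intro y hy
    have h1 : LinearIndependent ℝ (Matrix.of (e y)).row := hli y hy
    rw [Matrix.linearIndependent_rows_iff_isUnit, Matrix.isUnit_iff_isUnit_det] at h1
    exact h1.ne_zero
  have hmul : ∀ y ∈ U, Matrix.of (e y) * (Matrix.of (f y))ᵀ = 1 := by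
    intro y hy
    ext j k
    simp only [Matrix.mul_apply, Matrix.transpose_apply, Matrix.of_apply, Matrix.one_apply]
    exact hf y hy j k
  have hmul' : ∀ ν α, ∑ j, f p.1 j ν * e p.1 j α = if ν = α then (1 : ℝ) else 0 := by
    intro ν α
    have h1 := mul_eq_one_comm.mp (hmul p.1 hpU)
    have h2 := congrFun (congrFun h1 ν) α
    simpa only [Matrix.mul_apply, Matrix.transpose_apply, Matrix.of_apply, Matrix.one_apply]
      using h2
  have hed : ∀ j α, DifferentiableAt ℝ (fun y => e y j α) p.1 := fun j α =>
    ((he j α).contDiffAt (hU.mem_nhds hpU)).differentiableAt (by norm_num)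
  have hfd : ∀ j α, DifferentiableAt ℝ (fun y => f y j α) p.1 := by
    intro j α
    have hev : (fun y => f y j α) =ᶠ[nhds p.1]
        fun y => ((Matrix.of (e y)).det)⁻¹ * (Matrix.of (e y)).adjugate α j := by
      filter_upwards [hU.mem_nhds hpU] with y hy
      have h1 : (Matrix.of (e y))⁻¹ = (Matrix.of (f y))ᵀ := Matrix.inv_eq_right_inv (hmul y hy)
      have h2 := congrFun (congrFun h1 α) j
      rw [Matrix.inv_def, Ring.inverse_eq_inv'] at h2
      simpa using h2.symm
    refine DifferentiableAt.congr_of_eventuallyEq ?_ hev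
    have hD : DifferentiableAt ℝ (fun y => (Matrix.of (e y)).det) p.1 := by
      simp only [Matrix.det_fin_three, Matrix.of_apply]
      fun_prop
    refine (hD.inv (hdet _ hpU)).mul ?_
    fin_cases α <;> fin_cases j <;>
      simp [Matrix.adjugate_fin_three] <;> fun_prop
  have hd : ∀ m j μ, ∑ ν, (e p.1 m ν * fderiv ℝ (fun y => f y j ν) p.1 (Pi.single μ 1)
      + f p.1 j ν * fderiv ℝ (fun y => e y m ν) p.1 (Pi.single μ 1)) = 0 := by
    intro m j μ
    have h1 : HasFDerivAt (fun y => ∑ ν, e y m ν * f y j ν)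
        (∑ ν, (e p.1 m ν • fderiv ℝ (fun y => f y j ν) p.1
          + f p.1 j ν • fderiv ℝ (fun y => e y m ν) p.1)) p.1 :=
      HasFDerivAt.fun_sum fun ν _ => (hed m ν).hasFDerivAt.mul (hfd j ν).hasFDerivAt
    have h2 : HasFDerivAt (fun y => ∑ ν, e y m ν * f y j ν) (0 : (Fin 3 → ℝ) →L[ℝ] ℝ) p.1 := by
      refine (hasFDerivAt_const (if m = j then (1 : ℝ) else 0) p.1).congr_of_eventuallyEq ?_
      filter_upwards [hU.mem_nhds hpU] with y hy
      exact hf y hy m j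
    have h3 := DFunLike.congr_fun (h1.unique h2) (Pi.single μ 1)
    simpa using h3
  -- the momentum in the frame
  let η : ((Fin 3 → ℝ) × (Fin 3 → ℝ)) → Fin 3 → ℝ := fun q j => ∑ α, e q.1 j α * q.2 α
  let h : ((Fin 3 → ℝ) × (Fin 3 → ℝ)) → ℝ := fun q =>
    Real.sqrt (∑ α, ∑ β, gM e q.1 α β * q.2 α * q.2 β)
  have hG : ∀ q : (Fin 3 → ℝ) × (Fin 3 → ℝ), ∑ α, ∑ β, gM e q.1 α β * q.2 α * q.2 β
      = η q 0 ^ 2 + η q 1 ^ 2 + η q 2 ^ 2 := by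
    intro q
    simp only [gM, η, Matrix.of_apply, Fin.sum_univ_three]
    ring
  have hηd : ∀ j, HasFDerivAt (fun q => η q j)
      (∑ α, (e p.1 j α • (ContinuousLinearMap.proj α).comp
          (ContinuousLinearMap.snd ℝ (Fin 3 → ℝ) (Fin 3 → ℝ))
        + p.2 α • (fderiv ℝ (fun y => e y j α) p.1).comp
          (ContinuousLinearMap.fst ℝ (Fin 3 → ℝ) (Fin 3 → ℝ)))) p := by
    intro j
    refine HasFDerivAt.fun_sum fun α _ => ?_
    refine HasFDerivAt.mul (c := fun q : (Fin 3 → ℝ) × (Fin 3 → ℝ) => e q.1 j α)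
      (d := fun q : (Fin 3 → ℝ) × (Fin 3 → ℝ) => q.2 α) ?_ ?_
    · exact HasFDerivAt.comp (g := fun y => e y j α) p (hed j α).hasFDerivAt hasFDerivAt_fst
    · exact ((ContinuousLinearMap.proj (R := ℝ) (φ := fun _ : Fin 3 => ℝ) α).comp
          (ContinuousLinearMap.snd ℝ (Fin 3 → ℝ) (Fin 3 → ℝ))).hasFDerivAt
  have hηx : ∀ j α, fderiv ℝ (fun q => η q j) p (Pi.single α 1, 0)
      = ∑ β, fderiv ℝ (fun y => e y j β) p.1 (Pi.single α 1) * p.2 β := by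
    intro j α
    rw [(hηd j).fderiv]
    simp [mul_comm]
  have hηξ : ∀ j α, fderiv ℝ (fun q => η q j) p (0, Pi.single α 1) = e p.1 j α := by
    intro j α
    rw [(hηd j).fderiv]
    simp [Pi.single_apply]
  have hN : ∀ q ∈ V, Complex.normSq (v q 0) + Complex.normSq (v q 1) = 1 := by
    intro q hq
    simpa [Fin.sum_univ_two] using hnorm q hq
  have heq : ∀ q ∈ V,
      η q 0 = h q * (2 * ((v q 0).re * (v q 1).re + (v q 0).im * (v q 1).im)) ∧
      η q 1 = h q * (2 * ((v q 0).re * (v q 1).im - (v q 0).im * (v q 1).re)) ∧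
      η q 2 = h q * ((v q 0).re ^ 2 + (v q 0).im ^ 2 - (v q 1).re ^ 2 - (v q 1).im ^ 2) := by
    intro q hq
    have h0 := congrFun (heig q hq) 0
    have h1 := congrFun (heig q hq) 1
    refine aux_eigen (v q 0) (v q 1) (η q) (h q) (hN q hq) ?_ ?_
    · refine Eq.trans ?_ (h0.trans ?_)
      · simp [Matrix.mulVec, dotProduct, Fin.sum_univ_three, Fin.sum_univ_two, pauli, η,
          Matrix.add_apply]
        ring
      · simp [h]
    · refine Eq.trans ?_ (h1.trans ?_)
      · simp [Matrix.mulVec, dotProduct, Fin.sum_univ_three, Fin.sum_univ_two, pauli, η,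
          Matrix.add_apply]
        ring
      · simp [h]
  have hvd : ∀ i, DifferentiableAt ℝ (fun q => v q i) p := fun i =>
    ((hv i).contDiffAt (hV.mem_nhds hp)).differentiableAt (by norm_num)
  have hinv : ∀ ν, ∑ j, f p.1 j ν * η p j = p.2 ν := by
    intro ν
    have h1 : ∑ j, f p.1 j ν * η p j = ∑ α, (∑ j, f p.1 j ν * e p.1 j α) * p.2 α := by
      simp only [η, Fin.sum_univ_three]; ring
    rw [h1]
    simp [hmul']
  have hGpos : 0 < η p 0 ^ 2 + η p 1 ^ 2 + η p 2 ^ 2 := by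
    rcases (by positivity : 0 ≤ η p 0 ^ 2 + η p 1 ^ 2 + η p 2 ^ 2).lt_or_eq with h1 | h1
    · exact h1
    · exfalso
      have z0 : η p 0 = 0 := by
        nlinarith [sq_nonneg (η p 0), sq_nonneg (η p 1), sq_nonneg (η p 2)]
      have z1 : η p 1 = 0 := by
        nlinarith [sq_nonneg (η p 0), sq_nonneg (η p 1), sq_nonneg (η p 2)]
      have z2 : η p 2 = 0 := by
        nlinarith [sq_nonneg (η p 0), sq_nonneg (η p 1), sq_nonneg (η p 2)]
      apply hξ0
      ext ν
      rw [← hinv ν]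
      simp [Fin.sum_univ_three, z0, z1, z2]
  have hhpos : 0 < h p := by
    simp only [h]; rw [hG p]; exact Real.sqrt_pos.mpr hGpos
  have hpow : (∑ μ, ∑ ν, gM e p.1 μ ν * p.2 μ * p.2 ν) ^ ((3 : ℝ) / 2) = h p ^ 3 := by
    have h1 : (∑ μ, ∑ ν, gM e p.1 μ ν * p.2 μ * p.2 ν) = h p ^ 2 := by
      simp only [h]; rw [Real.sq_sqrt]; rw [hG p]; exact hGpos.le
    rw [h1, ← Real.rpow_natCast, ← Real.rpow_natCast, ← Real.rpow_mul hhpos.le]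
    norm_num
  -- the curvature, direction by direction
  have hcurv : ∀ α : Fin 3,
      4 * ((fderiv ℝ (fun q => v q 0) p (Pi.single α 1, 0)).re
          * (fderiv ℝ (fun q => v q 0) p (0, Pi.single α 1)).im
        - (fderiv ℝ (fun q => v q 0) p (Pi.single α 1, 0)).im
          * (fderiv ℝ (fun q => v q 0) p (0, Pi.single α 1)).re
        + (fderiv ℝ (fun q => v q 1) p (Pi.single α 1, 0)).re
          * (fderiv ℝ (fun q => v q 1) p (0, Pi.single α 1)).im
        - (fderiv ℝ (fun q => v q 1) p (Pi.single α 1, 0)).im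
          * (fderiv ℝ (fun q => v q 1) p (0, Pi.single α 1)).re) * h p ^ 3
      = (η p 0 * ((∑ β, fderiv ℝ (fun y => e y 1 β) p.1 (Pi.single α 1) * p.2 β) * e p.1 2 α
          - (∑ β, fderiv ℝ (fun y => e y 2 β) p.1 (Pi.single α 1) * p.2 β) * e p.1 1 α)
        + η p 1 * ((∑ β, fderiv ℝ (fun y => e y 2 β) p.1 (Pi.single α 1) * p.2 β) * e p.1 0 α
          - (∑ β, fderiv ℝ (fun y => e y 0 β) p.1 (Pi.single α 1) * p.2 β) * e p.1 2 α)
        + η p 2 * ((∑ β, fderiv ℝ (fun y => e y 0 β) p.1 (Pi.single α 1) * p.2 β) * e p.1 1 α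
          - (∑ β, fderiv ℝ (fun y => e y 1 β) p.1 (Pi.single α 1) * p.2 β) * e p.1 0 α)) := by
    intro α
    obtain ⟨ha, l, la0, la1, la2⟩ := aux_deriv V hV v η h p hp hvd
      (fun j => (hηd j).differentiableAt) hN (fun q hq => (heq q hq).1)
      (fun q hq => (heq q hq).2.1) (fun q hq => (heq q hq).2.2) (Pi.single α 1, 0) _ _ rfl rfl
    obtain ⟨hb, m, lb0, lb1, lb2⟩ := aux_deriv V hV v η h p hp hvd
      (fun j => (hηd j).differentiableAt) hN (fun q hq => (heq q hq).1)
      (fun q hq => (heq q hq).2.1) (fun q hq => (heq q hq).2.2) (0, Pi.single α 1) _ _ rfl rfl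
    obtain ⟨hn0, hn1, hn2⟩ := heq p hp
    have hN1 := hN p hp
    simp only [Complex.normSq_apply] at hN1
    rw [hηx] at la0 la1 la2
    rw [hηξ] at lb0 lb1 lb2
    rw [la0, la1, la2, lb0, lb1, lb2, hn0, hn1, hn2]
    generalize h p = H
    generalize fderiv ℝ (fun q => v q 0) p (Pi.single α 1, 0) = a0 at *
    generalize fderiv ℝ (fun q => v q 1) p (Pi.single α 1, 0) = a1 at *
    generalize fderiv ℝ (fun q => v q 0) p (0, Pi.single α 1) = b0 at *
    generalize fderiv ℝ (fun q => v q 1) p (0, Pi.single α 1) = b1 at *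
    have key := fun n A B => aux_spinor_identity (v p 0).re (v p 0).im (v p 1).re (v p 1).im
      a0.re a0.im a1.re a1.im b0.re b0.im b1.re b1.im (by linarith) ha hb n A B
    have key' := key ![_, _, _] ![_, _, _] ![_, _, _] rfl rfl rfl rfl rfl rfl rfl rfl rfl
    simp only [Matrix.cons_val_zero, Matrix.cons_val_one, Matrix.cons_val] at key'
    rw [← key']
    ring
  -- the determinant factor
  have hS : charge e p.1 * (Real.sqrt ((gM e p.1)⁻¹.det) * (Matrix.of (e p.1)).det) = 1 := by
    have h1 : gM e p.1 = (Matrix.of (e p.1))ᵀ * Matrix.of (e p.1) := by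
      ext α β
      simp [gM, Matrix.mul_apply]
    have hD := hdet p.1 hpU
    rw [h1, Matrix.det_nonsing_inv, Ring.inverse_eq_inv', Matrix.det_mul, Matrix.det_transpose,
      Real.sqrt_inv, Real.sqrt_mul_self_eq_abs]
    unfold charge
    generalize (Matrix.of (e p.1)).det = D at *
    rcases lt_or_gt_of_ne hD with h2 | h2
    · rw [Real.sign_of_neg h2, abs_of_neg h2]; field_simp
    · rw [Real.sign_of_pos h2, abs_of_pos h2]; field_simp
  have hT := aux_torsion (e p.1) (f p.1)
    (fun m ν μ => fderiv ℝ (fun y => e y m ν) p.1 (Pi.single μ 1))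
    (fun j ν μ => fderiv ℝ (fun y => f y j ν) p.1 (Pi.single μ 1)) p.2 (η p) (gM e p.1)
    (fun α β => rfl) (fun j => rfl) hd hinv (Real.sqrt ((gM e p.1)⁻¹.det))
  have hT' : (∑ α, ∑ β, starT e f p.1 α β * p.2 α * p.2 β) = _ := hT
  rw [hpow, hT', ← Finset.sum_congr rfl (fun α _ => hcurv α), ← Finset.sum_mul, ← Finset.mul_sum]
  have hR : ∀ X : ℝ, charge e p.1 / 2 * (Real.sqrt ((gM e p.1)⁻¹.det) * (Matrix.of (e p.1)).det
      * (4 * X * h p ^ 3) / h p ^ 3) = 2 * X := by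
    intro X
    rw [← mul_assoc (_ * _) (4 * X), mul_div_cancel_right₀ _ (pow_pos hhpos 3).ne']
    linear_combination 2 * X * hS


  rw [hR]
  rw [Finset.mul_sum, Finset.mul_sum, Complex.ofReal_sum]
  refine Finset.sum_congr rfl fun α _ => ?_
  simp only [Fin.sum_univ_two]
  apply Complex.ext
  · simp
    ring
  · simp
    ring

end
end

section
/- Let U ⊆ ℝ³ be open and let e_j : U → ℝ³ (j = 1,2,3) be a continuously differentiable frame, i.e. e₁(x), e₂(x), e₃(x) are linearly independent at every x ∈ U. Set σ^α := Σ_{j=1}^{3} e_j^α s^j, g^{αβ} := Σ_{j=1}^{3} e_j^α e_j^β, let g_{αβ} be the inverse matrix of g^{αβ}, set σ_β := Σ_α g_{βα} σ^α, let the coframe e^k be defined by Σ_α e_j^α e^k_α = δ_j^k, and let Γ(β;αγ) := (1/2) Σ_δ g^{βδ} (∂g_{γδ}/∂x^α + ∂g_{αδ}/∂x^γ − ∂g_{αγ}/∂x^δ) be the Christoffel symbols. Define A₀(x) := −(i/4) Σ_{α,β} σ^α σ_β (∂σ^β/∂x^α + Σ_γ Γ(β;αγ) σ^γ) + (i/2)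 Σ_{α,β} σ^α Γ(β;αβ), and the subprincipal symbol A_sub(x) := A₀(x) + (i/2) Σ_α ∂σ^α/∂x^α. Let c(x) := sign of the determinant of the 3×3 matrix whose j-th row is e_j(x), and define *T^ax(x) := (1/3) Σ_{k,l} δ_{kl} √(det g^{αβ}) [ e^k_1 ∂e^l_3/∂x^2 + e^k_2 ∂e^l_1/∂x^3 + e^k_3 ∂e^l_2/∂x^1 − e^k_1 ∂e^l_2/∂x^3 − e^k_2 ∂e^l_3/∂x^1 − e^k_3 ∂e^l_1/∂x^2 ]. Then at every x ∈ U: A_sub(x) = (3 c(x)/4) · *T^ax(x) · I, where I is the 2×2 identity matrix. -/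
open Complex Matrix BigOperators

noncomputable section

/-- The covariant metric g_{αβ}, inverse matrix of g^{αβ}. -/
def glM (e : (Fin 3 → ℝ) → Fin 3 → Fin 3 → ℝ) (x : Fin 3 → ℝ) : Matrix (Fin 3) (Fin 3) ℝ :=
  (gM e x)⁻¹

/-- The Pauli matrices σ^α = Σ_j e_j^α s^j of the frame. -/
def sigma' (e : (Fin 3 → ℝ) → Fin 3 → Fin 3 → ℝ) (x : Fin 3 → ℝ) (α : Fin 3) :
    Matrix (Fin 2) (Fin 2) ℂ :=
  ∑ j, ((e x j α : ℝ) : ℂ) • pauli j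

/-- σ_β = Σ_α g_{βα} σ^α. -/
def sigmaLow (e : (Fin 3 → ℝ) → Fin 3 → Fin 3 → ℝ) (x : Fin 3 → ℝ) (β : Fin 3) :
    Matrix (Fin 2) (Fin 2) ℂ :=
  ∑ α, ((glM e x β α : ℝ) : ℂ) • sigma' e x α

/-- The Christoffel symbols Γ(β;αγ) of the metric. -/
def christoffel (e : (Fin 3 → ℝ) → Fin 3 → Fin 3 → ℝ) (x : Fin 3 → ℝ) (β α γ : Fin 3) : ℝ :=
  (1 / 2) * ∑ δ, gM e x β δ *
    (fderiv ℝ (fun y => glM e y γ δ) x (Pi.single α 1)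
      + fderiv ℝ (fun y => glM e y α δ) x (Pi.single γ 1)
      - fderiv ℝ (fun y => glM e y α γ) x (Pi.single δ 1))

/-- ∂σ^β/∂x^α (entrywise). -/
def Dsigma (e : (Fin 3 → ℝ) → Fin 3 → Fin 3 → ℝ) (x : Fin 3 → ℝ) (α β : Fin 3) :
    Matrix (Fin 2) (Fin 2) ℂ :=
  Matrix.of fun i j => fderiv ℝ (fun y => sigma' e y β i j) x (Pi.single α 1)

/-- The zero-order part A₀ of the massless Dirac operator on half-densities. -/
def A0 (e : (Fin 3 → ℝ) → Fin 3 → Fin 3 → ℝ) (x : Fin 3 → ℝ) : Matrix (Fin 2) (Fin 2) ℂ :=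
  (-(Complex.I / 4)) • (∑ α, ∑ β, sigma' e x α * sigmaLow e x β *
      (Dsigma e x α β + ∑ γ, ((christoffel e x β α γ : ℝ) : ℂ) • sigma' e x γ))
    + (Complex.I / 2) • (∑ α, ∑ β, ((christoffel e x β α β : ℝ) : ℂ) • sigma' e x α)

/-- The subprincipal symbol A_sub = A₀ + (i/2) Σ_α ∂σ^α/∂x^α. -/
def Asub (e : (Fin 3 → ℝ) → Fin 3 → Fin 3 → ℝ) (x : Fin 3 → ℝ) : Matrix (Fin 2) (Fin 2) ℂ :=
  A0 e x + (Complex.I / 2) • ∑ α, Dsigma e x α α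

/-- The Hodge dual *T^ax of the axial torsion, expressed via the coframe f. -/
def starTax (e : (Fin 3 → ℝ) → Fin 3 → Fin 3 → ℝ)
    (f : (Fin 3 → ℝ) → Fin 3 → Fin 3 → ℝ) (x : Fin 3 → ℝ) : ℝ :=
  (1 / 3) * ∑ k, ∑ l, (if k = l then (1 : ℝ) else 0) * Real.sqrt ((gM e x).det) *
    (f x k 0 * fderiv ℝ (fun y => f y l 2) x (Pi.single 1 1)
      + f x k 1 * fderiv ℝ (fun y => f y l 0) x (Pi.single 2 1)
      + f x k 2 * fderiv ℝ (fun y => f y l 1) x (Pi.single 0 1)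
      - f x k 0 * fderiv ℝ (fun y => f y l 1) x (Pi.single 2 1)
      - f x k 1 * fderiv ℝ (fun y => f y l 2) x (Pi.single 0 1)
      - f x k 2 * fderiv ℝ (fun y => f y l 0) x (Pi.single 1 1))


/-- Frame components of the derivative of the coframe. -/
def frameD (E : Fin 3 → Fin 3 → ℝ) (df : Fin 3 → Fin 3 → Fin 3 → ℝ) (i k j : Fin 3) : ℝ :=
  ∑ α, ∑ β, E i α * E j β * df α k β

/-- Frame components of the Christoffel symbols. -/
def frameG (D : Fin 3 → Fin 3 → Fin 3 → ℝ) (k i j : Fin 3) : ℝ :=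
  (1 / 2) * ((D i k j + D i j k) + (D j k i + D j i k) - (D k j i + D k i j))

lemma contr_mul (E F : Fin 3 → Fin 3 → ℝ)
    (h : ∀ j k, ∑ α, E j α * F k α = if j = k then (1 : ℝ) else 0)
    (s Y : Fin 3 → Matrix (Fin 2) (Fin 2) ℂ) :
    ∑ α, (∑ a, ((E a α : ℝ) : ℂ) • s a) * (∑ i, ((F i α : ℝ) : ℂ) • Y i) = ∑ i, s i * Y i := by
  have h' : ∀ j k, ∑ α, ((E j α : ℝ) : ℂ) * ((F k α : ℝ) : ℂ) = if j = k then (1 : ℂ) else 0 := by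
    intro j k
    have := congrArg (fun r : ℝ => (r : ℂ)) (h j k)
    push_cast at this
    rw [this]; split_ifs <;> simp
  calc _ = ∑ α, ∑ a, ∑ i, (((E a α : ℝ) : ℂ) * ((F i α : ℝ) : ℂ)) • (s a * Y i) := by
        simp only [Finset.sum_mul_sum, smul_mul_smul_comm]
    _ = ∑ a, ∑ i, (∑ α, ((E a α : ℝ) : ℂ) * ((F i α : ℝ) : ℂ)) • (s a * Y i) := by
        simp only [Finset.sum_smul]
        rw [Finset.sum_comm]
        refine Finset.sum_congr rfl fun a _ => ?_
        rw [Finset.sum_comm]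
    _ = _ := by
        simp only [h']
        simp

lemma final_algebra (D : Fin 3 → Fin 3 → Fin 3 → ℝ) :
    (-(Complex.I / 4)) • (∑ i, pauli i * ∑ k, pauli k *
        ∑ j, ((frameG D k i j - D i k j : ℝ) : ℂ) • pauli j)
      + (Complex.I / 2) • (∑ i, pauli i * (((∑ k, frameG D k i k : ℝ) : ℂ) • 1))
      + (Complex.I / 2) • (∑ j, ((-∑ k, D k k j : ℝ) : ℂ) • pauli j)
    = (((1 / 4) * (D 1 0 2 + D 2 1 0 + D 0 2 1 - D 2 0 1 - D 0 1 2 - D 1 2 0) : ℝ) : ℂ)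
        • (1 : Matrix (Fin 2) (Fin 2) ℂ) := by
  have hI : Complex.I ^ 2 = -1 := Complex.I_sq
  have hI3 : Complex.I ^ 3 = -Complex.I := by rw [pow_succ, hI]; ring
  have hI4 : Complex.I ^ 4 = 1 := Complex.I_pow_four
  ext a b
  fin_cases a <;> fin_cases b <;>
  · simp [pauli, frameG, Fin.sum_univ_three, Matrix.mul_apply, Fin.sum_univ_two, Matrix.add_apply]
    ring_nf
    simp only [hI, hI3, hI4]
    ring_nf

lemma df_frame (E F : Fin 3 → Fin 3 → ℝ) (df : Fin 3 → Fin 3 → Fin 3 → ℝ)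
    (h2 : ∀ α β, ∑ k, E k α * F k β = if α = β then (1 : ℝ) else 0) (α k β : Fin 3) :
    df α k β = ∑ i, ∑ j, F i α * F j β * frameD E df i k j := by
  symm
  calc _ = ∑ α', ∑ β', (∑ i, E i α' * F i α) * (∑ j, E j β' * F j β) * df α' k β' := by
        simp only [frameD, Fin.sum_univ_three]; ring
    _ = _ := by simp [h2]

lemma de_frame (E F : Fin 3 → Fin 3 → ℝ) (df de : Fin 3 → Fin 3 → Fin 3 → ℝ)
    (h2 : ∀ α β, ∑ k, E k α * F k β = if α = β then (1 : ℝ) else 0)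
    (h3 : ∀ α j k, ∑ β, (E j β * df α k β + F k β * de α j β) = 0) (α j β : Fin 3) :
    de α j β = -∑ i, ∑ k, F i α * frameD E df i k j * E k β := by
  have a1 : de α j β = ∑ γ, (∑ k, E k β * F k γ) * de α j γ := by simp [h2]
  have a2 : ∑ γ, (∑ k, E k β * F k γ) * de α j γ = ∑ k, E k β * ∑ γ, F k γ * de α j γ := by
    simp only [Fin.sum_univ_three]; ring
  have a3 : ∀ k, ∑ γ, F k γ * de α j γ = -∑ γ, E j γ * df α k γ := by
    intro k
    have := h3 α j k
    rw [Finset.sum_add_distrib] at this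
    linarith
  have a4 : ∀ k, ∑ i, F i α * frameD E df i k j = ∑ γ, E j γ * df α k γ := by
    intro k
    calc _ = ∑ α', ∑ β', (∑ i, E i α' * F i α) * E j β' * df α' k β' := by
          simp only [frameD, Fin.sum_univ_three]; ring
      _ = _ := by simp [h2]
  rw [a1, a2]
  simp only [a3, ← a4]
  simp only [Fin.sum_univ_three]; ring

/-- The frame expression of the Christoffel symbols. -/
lemma chr_frame (E F : Fin 3 → Fin 3 → ℝ) (df : Fin 3 → Fin 3 → Fin 3 → ℝ)
    (h1 : ∀ j k, ∑ α, E j α * F k α = if j = k then (1 : ℝ) else 0)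
    (h2 : ∀ α β, ∑ k, E k α * F k β = if α = β then (1 : ℝ) else 0)
    (dg : Fin 3 → Fin 3 → Fin 3 → ℝ)
    (hdg : ∀ α β γ, dg α β γ = ∑ k, (F k β * df α k γ + F k γ * df α k β)) (β α γ : Fin 3) :
    (1 / 2) * ∑ δ, (∑ m, E m β * E m δ) * (dg α γ δ + dg γ α δ - dg δ α γ)
      = ∑ i, ∑ k, ∑ j, F i α * E k β * F j γ * frameG (frameD E df) k i j := by
  set D := frameD E df with hD
  have hg : ∀ α β γ, dg α β γ = ∑ i, ∑ j, ∑ l, F i α * F j β * F l γ * (D i l j + D i j l) := by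
    intro α β γ
    rw [hdg]
    simp only [df_frame E F df h2, ← hD]
    simp only [Fin.sum_univ_three]; ring
  have hs : ∀ δ, dg α γ δ + dg γ α δ - dg δ α γ
      = ∑ l, F l δ * (2 * ∑ i, ∑ j, F i α * F j γ * frameG D l i j) := by
    intro δ
    rw [hg, hg, hg]
    simp only [frameG, Fin.sum_univ_three]; ring
  simp only [hs]
  generalize hX : (fun l => 2 * ∑ i, ∑ j, F i α * F j γ * frameG D l i j) = X
  have hX' : ∀ l, 2 * ∑ i, ∑ j, F i α * F j γ * frameG D l i j = X l := fun l => congrFun hX l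
  simp only [hX']
  have : ∑ δ, (∑ m, E m β * E m δ) * ∑ l, F l δ * X l
      = ∑ m, ∑ l, E m β * (∑ δ, E m δ * F l δ) * X l := by
    simp only [Fin.sum_univ_three]; ring
  rw [this]
  simp only [h1]
  simp only [mul_ite, mul_one, mul_zero, ite_mul, zero_mul, Finset.sum_ite_eq, Finset.mem_univ,
    if_true, ← hX']
  simp only [Fin.sum_univ_three]; ring

lemma tax_frame (E F : Fin 3 → Fin 3 → ℝ) (df : Fin 3 → Fin 3 → Fin 3 → ℝ)
    (h2 : ∀ α β, ∑ k, E k α * F k β = if α = β then (1 : ℝ) else 0)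
    (hdet : (Matrix.of E).det * (Matrix.of F).det = 1) (D : Fin 3 → Fin 3 → Fin 3 → ℝ)
    (hD : D = frameD E df) :
    (Matrix.of E).det * ∑ k, (F k 0 * df 1 k 2 + F k 1 * df 2 k 0 + F k 2 * df 0 k 1
      - F k 0 * df 2 k 1 - F k 1 * df 0 k 2 - F k 2 * df 1 k 0)
      = D 1 0 2 + D 2 1 0 + D 0 2 1 - D 2 0 1 - D 0 1 2 - D 1 2 0 := by
  have : ∑ k, (F k 0 * df 1 k 2 + F k 1 * df 2 k 0 + F k 2 * df 0 k 1
      - F k 0 * df 2 k 1 - F k 1 * df 0 k 2 - F k 2 * df 1 k 0)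
      = (Matrix.of F).det * (D 1 0 2 + D 2 1 0 + D 0 2 1 - D 2 0 1 - D 0 1 2 - D 1 2 0) := by
    simp only [df_frame E F df h2, ← hD]
    rw [Matrix.det_fin_three]
    simp only [Fin.sum_univ_three, Matrix.of_apply]; ring
  rw [this, ← mul_assoc, hdet, one_mul]

lemma sign_mul_sqrt_sq (d : ℝ) : Real.sign d * Real.sqrt (d * d) = d := by
  rw [Real.sqrt_mul_self_eq_abs]
  rcases lt_trichotomy d 0 with h | h | h
  · rw [Real.sign_of_neg h, abs_of_neg h]; ring
  · simp [h]
  · rw [Real.sign_of_pos h, abs_of_pos h]; ring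

/-- Lemma 6.1: the subprincipal symbol of the massless Dirac operator on
half-densities equals (3c/4)(*T^ax)·I. -/
theorem subprincipal_symbol_of_massless_dirac
    (U : Set (Fin 3 → ℝ)) (hU : IsOpen U)
    (e : (Fin 3 → ℝ) → Fin 3 → Fin 3 → ℝ)
    (he : ∀ j α, ContDiffOn ℝ 1 (fun x => e x j α) U)
    (hli : ∀ x ∈ U, LinearIndependent ℝ (e x))
    (f : (Fin 3 → ℝ) → Fin 3 → Fin 3 → ℝ)
    (hf : ∀ x ∈ U, ∀ j k, ∑ α, e x j α * f x k α = if j = k then (1 : ℝ) else 0) :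
    ∀ x ∈ U,
      Asub e x = (((3 * charge e x / 4) * starTax e f x : ℝ) : ℂ)
        • (1 : Matrix (Fin 2) (Fin 2) ℂ) := by
  intro x hx
  have hUx : U ∈ nhds x := hU.mem_nhds hx
  have hmat : ∀ y ∈ U, (Matrix.of (e y)) * (Matrix.of (f y))ᵀ = 1 := by
    intro y hy
    ext j k
    rw [Matrix.mul_apply]
    simp only [Matrix.transpose_apply, Matrix.of_apply, hf y hy, Matrix.one_apply]
  have hmat2 : ∀ y ∈ U, (Matrix.of (f y))ᵀ * (Matrix.of (e y)) = 1 := fun y hy =>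
    mul_eq_one_comm.mp (hmat y hy)
  have hdet : ∀ y ∈ U, (Matrix.of (e y)).det * (Matrix.of (f y)).det = 1 := by
    intro y hy
    have := congrArg Matrix.det (hmat y hy)
    simpa [Matrix.det_mul] using this
  have h1 := hf x hx
  have h2' : ∀ y ∈ U, ∀ α β, ∑ k, e y k α * f y k β = if α = β then (1 : ℝ) else 0 := by
    intro y hy α β
    have := congrFun (congrFun (hmat2 y hy) β) α
    rw [Matrix.mul_apply] at this
    simp only [Matrix.transpose_apply, Matrix.of_apply, Matrix.one_apply] at this
    simp only [mul_comm (e y _ α), this, eq_comm]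
  have h2 := h2' x hx
  have hed : ∀ j α, DifferentiableAt ℝ (fun y => e y j α) x := fun j α =>
    ((he j α).contDiffAt hUx).differentiableAt (by norm_num)
  have hfd : ∀ k α, DifferentiableAt ℝ (fun y => f y k α) x := by
    intro k α
    have hne : (Matrix.of (e x)).det ≠ 0 := left_ne_zero_of_mul_eq_one (hdet x hx)
    have heq : (fun y => f y k α) =ᶠ[nhds x]
        fun y => (Matrix.of (e y)).det⁻¹ * (Matrix.of (e y)).adjugate α k := by
      filter_upwards [hUx] with y hy
      have : (Matrix.of (f y))ᵀ = (Matrix.of (e y))⁻¹ :=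
        (Matrix.inv_eq_right_inv (hmat y hy)).symm
      have := congrFun (congrFun this α) k
      simpa [Matrix.inv_def] using this
    refine DifferentiableAt.congr_of_eventuallyEq ?_ heq
    refine DifferentiableAt.mul (DifferentiableAt.inv ?_ hne) ?_
    · simp only [Matrix.det_fin_three, Matrix.of_apply]
      fun_prop
    · simp only [Matrix.adjugate_fin_three, Matrix.of_apply]
      fin_cases α <;> fin_cases k <;> simp <;> fun_prop
  have hgl : ∀ y ∈ U, ∀ α β, glM e y α β = ∑ k, f y k α * f y k β := by
    intro y hy α β
    have hg : gM e y = (Matrix.of (e y))ᵀ * (Matrix.of (e y)) := by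
      ext a b
      simp [gM, Matrix.mul_apply]
    have : glM e y = (Matrix.of (f y))ᵀ * (Matrix.of (f y)) := by
      unfold glM
      apply Matrix.inv_eq_right_inv
      rw [hg]
      calc _ = (Matrix.of (e y))ᵀ * ((Matrix.of (e y)) * (Matrix.of (f y))ᵀ) * (Matrix.of (f y)) := by
            simp only [Matrix.mul_assoc]
        _ = ((Matrix.of (f y))ᵀ * (Matrix.of (e y)))ᵀ := by
            rw [hmat y hy, Matrix.mul_one, Matrix.transpose_mul, Matrix.transpose_transpose]
        _ = 1 := by rw [hmat2 y hy, Matrix.transpose_one]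
    rw [this, Matrix.mul_apply]
    rfl
  obtain ⟨df, hdf⟩ : ∃ df : Fin 3 → Fin 3 → Fin 3 → ℝ, ∀ α k β,
      fderiv ℝ (fun y => f y k β) x (Pi.single α 1) = df α k β := ⟨_, fun _ _ _ => rfl⟩
  obtain ⟨de, hde⟩ : ∃ de : Fin 3 → Fin 3 → Fin 3 → ℝ, ∀ α k β,
      fderiv ℝ (fun y => e y k β) x (Pi.single α 1) = de α k β := ⟨_, fun _ _ _ => rfl⟩
  obtain ⟨dg, hdg0⟩ : ∃ dg : Fin 3 → Fin 3 → Fin 3 → ℝ, ∀ α k β,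
      fderiv ℝ (fun y => glM e y k β) x (Pi.single α 1) = dg α k β := ⟨_, fun _ _ _ => rfl⟩
  have hdg : ∀ α β γ, dg α β γ = ∑ k, (f x k β * df α k γ + f x k γ * df α k β) := by
    intro α β γ
    have heq : (fun y => glM e y β γ) =ᶠ[nhds x] fun y => ∑ k, f y k β * f y k γ := by
      filter_upwards [hUx] with y hy using hgl y hy β γ
    rw [← hdg0, heq.fderiv_eq, fderiv_fun_sum (fun k _ => (hfd k β).fun_mul (hfd k γ))]
    rw [_root_.sum_apply]
    refine Finset.sum_congr rfl fun k _ => ?_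
    rw [fderiv_fun_mul (hfd k β) (hfd k γ)]
    simp [hdf]
  have h3 : ∀ α j k, ∑ β, (e x j β * df α k β + f x k β * de α j β) = 0 := by
    intro α j k
    have heq : (fun y => ∑ β, e y j β * f y k β) =ᶠ[nhds x] fun _ => if j = k then (1 : ℝ) else 0 := by
      filter_upwards [hUx] with y hy using hf y hy j k
    have h0 := heq.fderiv_eq (𝕜 := ℝ)
    rw [fderiv_fun_sum (fun β _ => (hed j β).fun_mul (hfd k β)), fderiv_fun_const] at h0
    have h0 := congrArg (fun L => L (Pi.single α 1)) h0
    simp only [_root_.sum_apply] at h0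
    rw [← (show _ = (0 : ℝ) from h0)]
    refine Finset.sum_congr rfl fun β _ => ?_
    rw [fderiv_fun_mul (hed j β) (hfd k β)]
    simp [hdf, hde]
  obtain ⟨D, hD⟩ : ∃ D, D = frameD (e x) df := ⟨_, rfl⟩
  have hde' := de_frame (e x) (f x) df de h2 h3
  rw [← hD] at hde'
  have hchr : ∀ β α γ, christoffel e x β α γ
      = ∑ i, ∑ k, ∑ j, f x i α * e x k β * f x j γ * frameG D k i j := by
    intro β α γ
    rw [hD, ← chr_frame (e x) (f x) df h1 h2 dg hdg]
    simp only [christoffel, hdg0, gM, Matrix.of_apply]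
  have hDs : ∀ α β, Dsigma e x α β = ∑ j, ((de α j β : ℝ) : ℂ) • pauli j := by
    intro α β
    ext a b
    simp only [Dsigma, sigma', Matrix.of_apply, Matrix.sum_apply, Matrix.smul_apply, smul_eq_mul]
    have hder : ∀ j, HasFDerivAt (fun y => ((e y j β : ℝ) : ℂ) * pauli j a b)
        ((pauli j a b) • (Complex.ofRealCLM.comp (fderiv ℝ (fun y => e y j β) x))) x := by
      intro j
      exact (Complex.ofRealCLM.hasFDerivAt.comp x (hed j β).hasFDerivAt).mul_const (pauli j a b)
    rw [(HasFDerivAt.fun_sum (fun j _ => hder j)).fderiv]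
    simp [hde, mul_comm]
  have hsl : ∀ β, sigmaLow e x β = ∑ b, ((f x b β : ℝ) : ℂ) • pauli b := by
    intro β
    simp only [sigmaLow, sigma', Finset.smul_sum, smul_smul]
    rw [Finset.sum_comm]
    refine Finset.sum_congr rfl fun j _ => ?_
    rw [← Finset.sum_smul]
    congr 1
    have : ∑ α, glM e x β α * e x j α = f x j β := by
      simp only [hgl x hx]
      calc _ = ∑ k, f x k β * ∑ α, e x j α * f x k α := by
            simp only [Fin.sum_univ_three]; ring
        _ = _ := by simp [h1]
    rw [← this]
    push_cast
    rfl
  have h1' : ∀ j k, ∑ α, f x j α * e x k α = if j = k then (1 : ℝ) else 0 := by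
    intro j k
    simp only [mul_comm (f x j _), h1, eq_comm]
  have hcov : ∀ α β, Dsigma e x α β + ∑ γ, ((christoffel e x β α γ : ℝ) : ℂ) • sigma' e x γ
      = ∑ k, ((e x k β : ℝ) : ℂ) • ∑ i, ((f x i α : ℝ) : ℂ) •
          ∑ j, ((frameG D k i j - D i k j : ℝ) : ℂ) • pauli j := by
    intro α β
    rw [hDs]
    have hc : ∑ γ, ((christoffel e x β α γ : ℝ) : ℂ) • sigma' e x γ
        = ∑ j, ((∑ γ, christoffel e x β α γ * e x j γ : ℝ) : ℂ) • pauli j := by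
      simp only [sigma', Finset.smul_sum, smul_smul]
      rw [Finset.sum_comm]
      refine Finset.sum_congr rfl fun j _ => ?_
      rw [← Finset.sum_smul]
      push_cast
      rfl
    have hc2 : ∀ j, ∑ γ, christoffel e x β α γ * e x j γ
        = ∑ i, ∑ k, f x i α * e x k β * frameG D k i j := by
      intro j
      simp only [hchr]
      calc _ = ∑ i, ∑ k, ∑ l, (∑ γ, f x l γ * e x j γ) * (f x i α * e x k β * frameG D k i l) := by
            simp only [Fin.sum_univ_three]; ring
        _ = _ := by simp [h1']
    rw [hc]
    simp only [hc2, hde']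
    rw [← Finset.sum_add_distrib]
    simp only [Finset.smul_sum, smul_smul]
    simp only [Fin.sum_univ_three]
    push_cast
    module
  have htr : ∀ α, ∑ β, christoffel e x β α β = ∑ i, f x i α * ∑ k, frameG D k i k := by
    intro α
    simp only [hchr]
    calc _ = ∑ i, ∑ k, ∑ l, (∑ β, e x k β * f x l β) * (f x i α * frameG D k i l) := by
          simp only [Fin.sum_univ_three]; ring
      _ = _ := by simp [h1, Finset.mul_sum]
  have hdiv : ∑ α, Dsigma e x α α = ∑ j, ((-∑ k, D k k j : ℝ) : ℂ) • pauli j := by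
    simp only [hDs]
    rw [Finset.sum_comm]
    refine Finset.sum_congr rfl fun j _ => ?_
    rw [← Finset.sum_smul]
    congr 1
    rw [← Complex.ofReal_sum]
    congr 1
    simp only [hde']
    calc _ = -∑ i, ∑ k, (∑ α, f x i α * e x k α) * D i k j := by
          simp only [Fin.sum_univ_three]; ring
      _ = _ := by simp [h1']
  have hA1 : ∑ α, ∑ β, sigma' e x α * sigmaLow e x β *
      (Dsigma e x α β + ∑ γ, ((christoffel e x β α γ : ℝ) : ℂ) • sigma' e x γ)
      = ∑ i, pauli i * ∑ k, pauli k *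
        ∑ j, ((frameG D k i j - D i k j : ℝ) : ℂ) • pauli j := by
    simp only [hcov, hsl, Matrix.mul_assoc, ← Finset.mul_sum]
    simp only [contr_mul (f x) (e x) h1']
    rw [← contr_mul (e x) (f x) h1 pauli (fun i => ∑ k, pauli k *
      ∑ j, ((frameG D k i j - D i k j : ℝ) : ℂ) • pauli j)]
    refine Finset.sum_congr rfl fun α _ => ?_
    rw [show sigma' e x α = ∑ a, ((e x a α : ℝ) : ℂ) • pauli a from rfl]
    congr 1
    simp only [Finset.mul_sum, Finset.smul_sum, Matrix.mul_smul]
    rw [Finset.sum_comm]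
  have hA2 : ∑ α, ∑ β, ((christoffel e x β α β : ℝ) : ℂ) • sigma' e x α
      = ∑ i, pauli i * (((∑ k, frameG D k i k : ℝ) : ℂ) • 1) := by
    rw [← contr_mul (e x) (f x) h1]
    refine Finset.sum_congr rfl fun α _ => ?_
    rw [← Finset.sum_smul, ← Complex.ofReal_sum, htr, ← sigma']
    simp only [smul_smul, ← Finset.sum_smul, Matrix.mul_smul, Matrix.mul_one]
    push_cast
    rfl
  have hdetg : (gM e x).det = (Matrix.of (e x)).det * (Matrix.of (e x)).det := by
    have hg : gM e x = (Matrix.of (e x))ᵀ * (Matrix.of (e x)) := by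
      ext a b
      simp [gM, Matrix.mul_apply]
    rw [hg, Matrix.det_mul, Matrix.det_transpose]
  have hR : (3 * charge e x / 4) * starTax e f x
      = (1 / 4) * (D 1 0 2 + D 2 1 0 + D 0 2 1 - D 2 0 1 - D 0 1 2 - D 1 2 0) := by
    rw [← tax_frame (e x) (f x) df h2 (hdet x hx) D hD]
    have hs := sign_mul_sqrt_sq (Matrix.of (e x)).det
    rw [← hdetg] at hs
    simp only [starTax, charge, hdf]
    nth_rewrite 2 [← hs]
    simp only [ite_mul, one_mul, zero_mul, Finset.sum_ite_eq, Finset.mem_univ, if_true]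
    rw [← Finset.mul_sum]
    ring
  rw [hR, ← final_algebra D, Asub, A0, hA1, hA2, hdiv]


end
end

section
/- Let σ¹, σ², σ³ be trace-free Hermitian 2×2 complex matrices and define vectors e₁, e₂, e₃ ∈ ℝ³ by e₁^α := Re((σ^α)₁₂), e₂^α := −Im((σ^α)₁₂), e₃^α := (σ^α)₁₁ for α = 1,2,3 (the (1,1) entry of a trace-free Hermitian matrix is real). Then the ellipticity condition det(Σ_{α} ξ_α σ^α) ≠ 0 for all ξ ∈ ℝ³ \ {0} holds if and only if e₁, e₂, e₃ are linearly independent in ℝ³; and in that case the quadratic form ξ ↦ −det(Σ_α ξ_α σ^α) is positive definite. -/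
open Complex Matrix BigOperators

noncomputable section

/-- ellipticity of a trace-free Hermitian principal symbol is equivalent to
linear independence of the encoded frame, and then −det A₁(ξ) is positive definite. -/
theorem ellipticity_iff_frame_linearIndependent
    (σ : Fin 3 → Matrix (Fin 2) (Fin 2) ℂ)
    (hherm : ∀ α, (σ α).IsHermitian) (htr : ∀ α, (σ α).trace = 0)
    (e : Fin 3 → Fin 3 → ℝ)
    (he0 : ∀ α, e 0 α = (σ α 0 1).re)
    (he1 : ∀ α, e 1 α = -(σ α 0 1).im)
    (he2 : ∀ α, e 2 α = (σ α 0 0).re) :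
    ((∀ ξ : Fin 3 → ℝ, ξ ≠ 0 → (∑ α, (ξ α : ℂ) • σ α).det ≠ 0)
        ↔ LinearIndependent ℝ e)
    ∧ ((∀ ξ : Fin 3 → ℝ, ξ ≠ 0 → (∑ α, (ξ α : ℂ) • σ α).det ≠ 0) →
        ∀ ξ : Fin 3 → ℝ, ξ ≠ 0 →
          ∃ q : ℝ, 0 < q ∧ -(∑ α, (ξ α : ℂ) • σ α).det = (q : ℂ)) := by
  have key : ∀ ξ : Fin 3 → ℝ, -(∑ α, (ξ α : ℂ) • σ α).det =
      ((∑ j, ((Matrix.of e).mulVec ξ j) ^ 2 : ℝ) : ℂ) := by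
    intro ξ
    have h10 : ∀ α, σ α 1 0 = (starRingEnd ℂ) (σ α 0 1) := fun α => ((hherm α).apply 1 0).symm
    have h00 : ∀ α, (σ α 0 0).im = 0 := by
      intro α
      have h := congrArg Complex.im ((hherm α).apply 0 0)
      simp at h
      linarith
    have h11 : ∀ α, σ α 1 1 = -σ α 0 0 := by
      intro α
      have h := htr α
      rw [Matrix.trace_fin_two] at h
      linear_combination h
    rw [Matrix.det_fin_two]
    simp only [Matrix.mulVec, dotProduct, Fin.sum_univ_three, Matrix.add_apply, Matrix.smul_apply,
      smul_eq_mul, Matrix.of_apply, he0, he1, he2, h10, h11]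
    apply Complex.ext
    · simp [h00, -Complex.ofReal_add, pow_two]
      ring
    · simp [h00, pow_two]
      ring
  have keyne : ∀ ξ : Fin 3 → ℝ, (∑ α, (ξ α : ℂ) • σ α).det ≠ 0 ↔ (Matrix.of e).mulVec ξ ≠ 0 := by
    intro ξ
    rw [← neg_ne_zero, key, Complex.ofReal_ne_zero, not_iff_not,
      Finset.sum_eq_zero_iff_of_nonneg (fun i _ => sq_nonneg _), funext_iff]
    simp
  refine ⟨?_, ?_⟩
  · have h1 : LinearIndependent ℝ e ↔ IsUnit (Matrix.of e) :=
      Matrix.linearIndependent_rows_iff_isUnit (A := Matrix.of e)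
    rw [h1, ← Matrix.mulVec_injective_iff_isUnit, ← Matrix.coe_mulVecLin,
      injective_iff_map_eq_zero]
    simp only [keyne, Matrix.mulVecLin_apply]
    exact forall_congr' fun ξ => not_imp_not
  · intro h ξ hξ
    refine ⟨_, ?_, key ξ⟩
    have h0 : (0 : ℝ) ≤ ∑ j, ((Matrix.of e).mulVec ξ j) ^ 2 :=
      Finset.sum_nonneg fun i _ => sq_nonneg _
    refine lt_of_le_of_ne h0 fun h2 => h ξ hξ ?_
    rw [← neg_eq_zero, key, ← h2, Complex.ofReal_zero]

end
end

section
/- Let e₁, e₂, e₃ ∈ ℝ³ and ẽ₁, ẽ₂, ẽ₃ ∈ ℝ³ be two linearly independent triples, σ^α := Σ_j e_j^α s^j, σ̃^α := Σ_j ẽ_j^α s^j, g^{αβ} := Σ_j e_j^α e_j^β, g̃^{αβ} := Σ_j ẽ_j^α ẽ_j^β. If ξ, ξ̃ ∈ ℝ³ satisfy Σ_α ξ̃_α σ̃^α = Σ_α ξ_α σ^α, then Σ_{α,β} g̃^{αβ} ξ̃_α ξ̃_β = Σ_{α,β} g^{αβ} ξ_α ξ_β. -/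
open Complex Matrix BigOperators

noncomputable section

/-- the parallel transport defined by equating values of the principal symbol
preserves the Riemannian norm of covectors (metric compatibility of the teleparallel
connection). -/
theorem teleparallel_transport_isometric
    (e et : Fin 3 → Fin 3 → ℝ)
    (he : LinearIndependent ℝ e) (het : LinearIndependent ℝ et)
    (ξ ξt : Fin 3 → ℝ)
    (h : ∑ α, (ξt α : ℂ) • (∑ j, (et j α : ℂ) • pauli j)
        = ∑ α, (ξ α : ℂ) • (∑ j, (e j α : ℂ) • pauli j)) :
    ∑ α, ∑ β, (∑ j, et j α * et j β) * ξt α * ξt β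
      = ∑ α, ∑ β, (∑ j, e j α * e j β) * ξ α * ξ β := by
  have key : ∀ (f : Fin 3 → Fin 3 → ℝ) (x : Fin 3 → ℝ),
      ∑ α, ∑ β, (∑ j, f j α * f j β) * x α * x β = ∑ j, (∑ α, x α * f j α) ^ 2 := by
    intro f x
    simp only [Fin.sum_univ_three]
    ring
  have h00 := congrArg Complex.re (congrFun (congrFun h 0) 0)
  have h01 := congrFun (congrFun h 0) 1
  have h1 := congrArg Complex.re h01
  have h2 := congrArg Complex.im h01
  simp [Fin.sum_univ_three, pauli] at h00 h1 h2
  have k0 : ∑ α, ξt α * et 0 α = ∑ α, ξ α * e 0 α := by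
    simp only [Fin.sum_univ_three]; linarith
  have k1 : ∑ α, ξt α * et 1 α = ∑ α, ξ α * e 1 α := by
    simp only [Fin.sum_univ_three]; linarith
  have k2 : ∑ α, ξt α * et 2 α = ∑ α, ξ α * e 2 α := by
    simp only [Fin.sum_univ_three]; linarith
  rw [key, key]
  refine Finset.sum_congr rfl fun j _ => ?_
  fin_cases j
  · exact congrArg (· ^ 2) k0
  · exact congrArg (· ^ 2) k1
  · exact congrArg (· ^ 2) k2

end
end

section
/- Let e₁, e₂, e₃ ∈ ℝ³ be linearly independent, σ^α := Σ_{j=1}^{3} e_j^α s^j, g^{αβ} := Σ_{j=1}^{3} e_j^α e_j^β, and let g_{αβ} denote the inverse matrix of g^{αβ}. Then the quantity c := −(i/2) √(det g_{αβ}) · tr(σ¹ σ² σ³) is real and equals the sign of the determinant of the 3×3 real matrix E whose j-th row is e_j; in particular c ∈ {−1, +1}. -/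
open Complex Matrix BigOperators

noncomputable section

/-- The trace of the product is `2 i det e`. -/
lemma trace_sigma (e : Fin 3 → Fin 3 → ℝ) :
    ((∑ j, (e j 0 : ℂ) • pauli j) * (∑ j, (e j 1 : ℂ) • pauli j)
            * (∑ j, (e j 2 : ℂ) • pauli j)).trace
      = 2 * Complex.I * (((Matrix.of e : Matrix (Fin 3) (Fin 3) ℝ).det : ℝ) : ℂ) := by
  have hI : Complex.I ^ 2 = -1 := Complex.I_sq
  have hI3 : Complex.I ^ 3 = -Complex.I := by rw [pow_succ, hI]; ring
  rw [Matrix.det_fin_three]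
  simp [pauli, Fin.sum_univ_three, Matrix.trace_fin_two, Matrix.mul_apply, Fin.sum_univ_two]
  ring_nf
  try simp only [hI, hI3]
  try ring

/-- The inverse metric has determinant `(det e)⁻²`. -/
lemma sqrt_det_metric (e : Fin 3 → Fin 3 → ℝ) :
    Real.sqrt ((Matrix.of fun α β => ∑ j, e j α * e j β : Matrix (Fin 3) (Fin 3) ℝ)⁻¹.det)
      = |(Matrix.of e : Matrix (Fin 3) (Fin 3) ℝ).det|⁻¹ := by
  have h : (Matrix.of fun α β => ∑ j, e j α * e j β : Matrix (Fin 3) (Fin 3) ℝ)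
      = (Matrix.of e)ᵀ * Matrix.of e := by
    ext a b
    simp [Matrix.mul_apply]
  rw [h, Matrix.det_nonsing_inv, Matrix.det_mul, Matrix.det_transpose, Ring.inverse_eq_inv',
    Real.sqrt_inv, Real.sqrt_mul_self_eq_abs]

/-- the topological charge c = −(i/2)√(det g_{αβ}) tr(σ¹σ²σ³) is real and
equals sgn det(e_j^α); in particular c = ±1. -/
theorem topological_charge_eq_sign_det
    (e : Fin 3 → Fin 3 → ℝ) (he : LinearIndependent ℝ e) :
    -(Complex.I / 2)
        * ((Real.sqrt ((Matrix.of fun α β => ∑ j, e j α * e j β : Matrix (Fin 3) (Fin 3) ℝ)⁻¹.det) : ℝ) : ℂ)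
        * ((∑ j, (e j 0 : ℂ) • pauli j) * (∑ j, (e j 1 : ℂ) • pauli j)
            * (∑ j, (e j 2 : ℂ) • pauli j)).trace
      = ((Real.sign (Matrix.of e : Matrix (Fin 3) (Fin 3) ℝ).det : ℝ) : ℂ)
    ∧ (-(Complex.I / 2)
        * ((Real.sqrt ((Matrix.of fun α β => ∑ j, e j α * e j β : Matrix (Fin 3) (Fin 3) ℝ)⁻¹.det) : ℝ) : ℂ)
        * ((∑ j, (e j 0 : ℂ) • pauli j) * (∑ j, (e j 1 : ℂ) • pauli j)
            * (∑ j, (e j 2 : ℂ) • pauli j)).trace = 1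
      ∨ -(Complex.I / 2)
        * ((Real.sqrt ((Matrix.of fun α β => ∑ j, e j α * e j β : Matrix (Fin 3) (Fin 3) ℝ)⁻¹.det) : ℝ) : ℂ)
        * ((∑ j, (e j 0 : ℂ) • pauli j) * (∑ j, (e j 1 : ℂ) • pauli j)
            * (∑ j, (e j 2 : ℂ) • pauli j)).trace = -1) := by
  have hd : (Matrix.of e : Matrix (Fin 3) (Fin 3) ℝ).det ≠ 0 := by
    have hu : IsUnit (Matrix.of e : Matrix (Fin 3) (Fin 3) ℝ) :=
      Matrix.linearIndependent_rows_iff_isUnit.mp he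
    exact ((Matrix.isUnit_iff_isUnit_det _).mp hu).ne_zero
  rw [trace_sigma, sqrt_det_metric]
  generalize (Matrix.of e : Matrix (Fin 3) (Fin 3) ℝ).det = d at hd
  have key : -(Complex.I / 2) * ((|d|⁻¹ : ℝ) : ℂ) * (2 * Complex.I * (d : ℂ))
      = ((|d|⁻¹ * d : ℝ) : ℂ) := by
    push_cast
    linear_combination (-((|d| : ℝ) : ℂ)⁻¹ * (d : ℂ)) * Complex.I_sq
  rw [key]
  rcases lt_or_gt_of_ne hd with h | h
  · have h1 : |d|⁻¹ * d = -1 := by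
      rw [abs_of_neg h]
      field_simp
    rw [h1, Real.sign_of_neg h]
    exact ⟨rfl, Or.inr (by simp)⟩
  · have h1 : |d|⁻¹ * d = 1 := by
      rw [abs_of_pos h]
      field_simp
    rw [h1, Real.sign_of_pos h]
    exact ⟨rfl, Or.inl (by simp)⟩

end
end

section
/- Let U ⊆ ℝ³ be open, let e_j : U → ℝ³ (j = 1,2,3) be a differentiable frame (pointwise linearly independent), let the coframe e^k be defined by Σ_α e_j^α e^k_α = δ_j^k, let g_{βγ}(x) := Σ_{k=1}^{3} e^k_β(x) e^k_γ(x) (the inverse matrix of g^{αβ} = Σ_j e_j^α e_j^β), and let Γ^α_{μβ} := Σ_k e_k^α ∂e^k_β/∂x^μ be the teleparallel connection coefficients. Then the teleparallel connection is metric compatible: for all α, β, γ, ∂g_{βγ}/∂x^α − Σ_δ Γ^δ_{αβ} g_{δγ} − Σ_δ Γ^δ_{αγ} g_{βδ} = 0 on U. -/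
open BigOperators

noncomputable section

/-- The coframe is differentiable at each point of `U`. -/
lemma coframe_differentiableAt
    (U : Set (Fin 3 → ℝ)) (hU : IsOpen U)
    (e : (Fin 3 → ℝ) → Fin 3 → Fin 3 → ℝ)
    (hdiff : ∀ j α, DifferentiableOn ℝ (fun x => e x j α) U)
    (f : (Fin 3 → ℝ) → Fin 3 → Fin 3 → ℝ)
    (hf : ∀ x ∈ U, ∀ j k, ∑ α, e x j α * f x k α = if j = k then (1 : ℝ) else 0)
    (x : Fin 3 → ℝ) (hx : x ∈ U) (k α : Fin 3) :
    DifferentiableAt ℝ (fun y => f y k α) x := by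
  have hmul : ∀ y ∈ U, Matrix.of (e y) * (Matrix.of (f y)).transpose = 1 := by
    intro y hy
    ext j k
    simpa [Matrix.mul_apply, Matrix.one_apply] using hf y hy j k
  have hdet : ∀ y ∈ U, (Matrix.of (e y)).det ≠ 0 := by
    intro y hy h0
    have h := congrArg Matrix.det (hmul y hy)
    rw [Matrix.det_mul, h0] at h
    simp at h
  have hd : ∀ j α, DifferentiableAt ℝ (fun y => e y j α) x := fun j α =>
    (hdiff j α).differentiableAt (hU.mem_nhds hx)
  have hD : DifferentiableAt ℝ (fun y => (Matrix.of (e y)).det) x := by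
    simp only [Matrix.det_fin_three, Matrix.of_apply]
    fun_prop
  have hA : DifferentiableAt ℝ (fun y => (Matrix.of (e y)).adjugate α k) x := by
    simp only [Matrix.adjugate_fin_three, Matrix.of_apply]
    fin_cases α <;> fin_cases k <;> simp <;> fun_prop
  refine ((hD.inv (hdet x hx)).mul hA).congr_of_eventuallyEq ?_
  filter_upwards [hU.mem_nhds hx] with y hy
  have h := Matrix.inv_eq_right_inv (hmul y hy)
  rw [Matrix.inv_def, Ring.inverse_eq_inv'] at h
  have h2 := congrFun (congrFun h α) k
  simpa using h2.symm

/-- the teleparallel connection Γ^α_{μβ} = Σ_k e_k^α ∂e^k_β/∂x^μ is metric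
compatible: ∇_α g_{βγ} = ∂_α g_{βγ} − Γ^δ_{αβ} g_{δγ} − Γ^δ_{αγ} g_{βδ} = 0. -/
theorem teleparallel_connection_metric_compatible
    (U : Set (Fin 3 → ℝ)) (hU : IsOpen U)
    (e : (Fin 3 → ℝ) → Fin 3 → Fin 3 → ℝ)
    (hdiff : ∀ j α, DifferentiableOn ℝ (fun x => e x j α) U)
    (hli : ∀ x ∈ U, LinearIndependent ℝ (e x))
    (f : (Fin 3 → ℝ) → Fin 3 → Fin 3 → ℝ)
    (hf : ∀ x ∈ U, ∀ j k, ∑ α, e x j α * f x k α = if j = k then (1 : ℝ) else 0) :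
    ∀ x ∈ U, ∀ a β γ,
      fderiv ℝ (fun y => ∑ k, f y k β * f y k γ) x (Pi.single a 1)
        - ∑ δ, (∑ k, e x k δ * fderiv ℝ (fun y => f y k β) x (Pi.single a 1)) * (∑ k, f x k δ * f x k γ)
        - ∑ δ, (∑ k, e x k δ * fderiv ℝ (fun y => f y k γ) x (Pi.single a 1)) * (∑ k, f x k β * f x k δ) = 0 := by
  intro x hx a β γ
  have hd := coframe_differentiableAt U hU e hdiff f hf x hx
  have hg : fderiv ℝ (fun y => ∑ k, f y k β * f y k γ) x (Pi.single a 1)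
      = ∑ k, (f x k β * fderiv ℝ (fun y => f y k γ) x (Pi.single a 1)
          + f x k γ * fderiv ℝ (fun y => f y k β) x (Pi.single a 1)) := by
    rw [fderiv_fun_sum (fun k _ => (hd k β).fun_mul (hd k γ))]
    simp [fderiv_fun_mul (hd _ β) (hd _ γ)]
  have key : ∀ (p q : Fin 3 → ℝ),
      ∑ δ, (∑ k, e x k δ * p k) * (∑ k, f x k δ * q k) = ∑ k, p k * q k := by
    intro p q
    calc _ = ∑ j, ∑ k, (∑ δ, e x j δ * f x k δ) * (p j * q k) := by
          simp only [Fin.sum_univ_three]; ring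
      _ = _ := by simp [hf x hx]
  have key2 : ∀ δ, ∑ k, f x k β * f x k δ = ∑ k, f x k δ * f x k β := fun δ =>
    Finset.sum_congr rfl fun k _ => mul_comm _ _
  simp only [key2]
  rw [hg, key, key, Finset.sum_add_distrib]
  simp only [Fin.sum_univ_three]
  ring

end
end

section
/- Let V ⊆ ℝ³ × ℝ³ be open (coordinates (x, ξ)) and let v : V → ℂ² be continuously differentiable with ‖v(x,ξ)‖ = 1 for all (x,ξ) ∈ V. Set P(x,ξ) := v(x,ξ) v(x,ξ)^* (a 2×2 matrix). Then the generalized Poisson bracket {v^*, P, v} vanishes identically: Σ_{α=1}^{3} [ (∂v/∂x^α)^* P (∂v/∂ξ_α) − (∂v/∂ξ_α)^* P (∂v/∂x^α) ] = 0 on V. -/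
open Complex BigOperators

noncomputable section

lemma key_imag
    (V : Set ((Fin 3 → ℝ) × (Fin 3 → ℝ))) (hV : IsOpen V)
    (v : ((Fin 3 → ℝ) × (Fin 3 → ℝ)) → Fin 2 → ℂ)
    (hv : ∀ i, ContDiffOn ℝ 1 (fun p => v p i) V)
    (hnorm : ∀ p ∈ V, ∑ i, Complex.normSq (v p i) = 1)
    (p : (Fin 3 → ℝ) × (Fin 3 → ℝ)) (hp : p ∈ V) (w : (Fin 3 → ℝ) × (Fin 3 → ℝ)) :
    ∑ i, (v p i * (starRingEnd ℂ) (fderiv ℝ (fun q => v q i) p w)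
      + (starRingEnd ℂ) (v p i) * fderiv ℝ (fun q => v q i) p w) = 0 := by
  have hd : ∀ i, HasFDerivAt (fun q => v q i) (fderiv ℝ (fun q => v q i) p) p := fun i =>
    (((hv i).contDiffAt (hV.mem_nhds hp)).differentiableAt (by norm_num)).hasFDerivAt
  have h1 : HasFDerivAt (fun q => ∑ i, v q i * star (v q i)) _ p :=
    HasFDerivAt.fun_sum (u := Finset.univ) (fun i _ => (hd i).mul (hd i).star)
  have h2 : HasFDerivAt (fun q => ∑ i, v q i * star (v q i))
      (0 : ((Fin 3 → ℝ) × (Fin 3 → ℝ)) →L[ℝ] ℂ) p := by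
    refine (hasFDerivAt_const (1 : ℂ) p).congr_of_eventuallyEq ?_
    filter_upwards [hV.mem_nhds hp] with q hq
    have := congrArg (fun r : ℝ => (r : ℂ)) (hnorm q hq)
    simpa [Complex.normSq_eq_conj_mul_self, mul_comm] using this
  have h3 := congrArg (fun L => L w) (h1.unique h2)
  simpa using h3

/-- for a C¹ unit-norm field v(x,ξ) ∈ ℂ² and P = v v^*, the generalized
Poisson bracket {v^*, P, v} = Σ_α [v_{x^α}^* P v_{ξ_α} − v_{ξ_α}^* P v_{x^α}] vanishes. -/
theorem generalized_poisson_bracket_projection_vanishes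
    (V : Set ((Fin 3 → ℝ) × (Fin 3 → ℝ))) (hV : IsOpen V)
    (v : ((Fin 3 → ℝ) × (Fin 3 → ℝ)) → Fin 2 → ℂ)
    (hv : ∀ i, ContDiffOn ℝ 1 (fun p => v p i) V)
    (hnorm : ∀ p ∈ V, ∑ i, Complex.normSq (v p i) = 1) :
    ∀ p ∈ V,
      ∑ α : Fin 3,
        ((∑ i, ∑ j, (starRingEnd ℂ) (fderiv ℝ (fun q => v q i) p (Pi.single α 1, 0))
              * (v p i * (starRingEnd ℂ) (v p j))
              * fderiv ℝ (fun q => v q j) p (0, Pi.single α 1))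
          - (∑ i, ∑ j, (starRingEnd ℂ) (fderiv ℝ (fun q => v q i) p (0, Pi.single α 1))
              * (v p i * (starRingEnd ℂ) (v p j))
              * fderiv ℝ (fun q => v q j) p (Pi.single α 1, 0))) = 0 := by
  intro p hp
  refine Finset.sum_eq_zero fun α _ => ?_
  have ha := key_imag V hV v hv hnorm p hp (Pi.single α 1, 0)
  have hb := key_imag V hV v hv hnorm p hp (0, Pi.single α 1)
  simp only [Fin.sum_univ_two] at ha hb ⊢
  generalize fderiv ℝ (fun q => v q 0) p (Pi.single α 1, 0) = a0 at *
  generalize fderiv ℝ (fun q => v q 1) p (Pi.single α 1, 0) = a1 at *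
  generalize fderiv ℝ (fun q => v q 0) p (0, Pi.single α 1) = b0 at *
  generalize fderiv ℝ (fun q => v q 1) p (0, Pi.single α 1) = b1 at *
  linear_combination (b0 * (starRingEnd ℂ) (v p 0) + b1 * (starRingEnd ℂ) (v p 1)) * ha
    - (a0 * (starRingEnd ℂ) (v p 0) + a1 * (starRingEnd ℂ) (v p 1)) * hb

end
end
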